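/- Let q ≥ 0, n = 2^{q+1}, and let F : (ZMod n → ZMod 2) → (ZMod n → ZMod 2) be defined by F(x) i = x(i-1) + x(i) (the global transition function of a 2-XOR circulant network of size n with interaction-step 0). Then for every configuration x: (1) F^{2^q}(x) is a repeated configuration, i.e. (F^{2^q} x)(i + 2^q) = (F^{2^q} x)(i) for all i ∈ ZMod n; and (2) the half of F^{2^q}(x) has the same parity of number of 1s as x, i.e. Σ_{i : 0 ≤ i < 2^q} (F^{2^q} x)(i) = Σ_{i ∈ ZMod n} x(i) in ZMod 2. -/

import Mathlib

/-!
Over characteristic two, squaring is additive: if `S` is the shift `(S x) i = x (i - 1)`, then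
`F = 1 + S` and `F ^ (2 ^ k) = 1 + S ^ (2 ^ k)` (`two_xor_iterate_two_pow`). At `k = q` the shift
by `2 ^ q` is an involution of `ZMod (2 ^ (q + 1))`, so `1 + S ^ (2 ^ q)` has `2 ^ q`-periodic
image, and summing it over the half `0, …, 2 ^ q - 1` counts every index exactly once.
-/

theorem two_xor_iterate_two_pow {n : ℕ} (F : (ZMod n → ZMod 2) → (ZMod n → ZMod 2))
    (hF : ∀ (x : ZMod n → ZMod 2) (i : ZMod n), F x i = x (i - 1) + x i) (k : ℕ) :
    ∀ (x : ZMod n → ZMod 2) (i : ZMod n), F^[2 ^ k] x i = x (i - 2 ^ k) + x i := by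
  induction k with
  | zero => intro x i; simp [hF]
  | succ k ih =>
    intro x i
    have hpow : i - 2 ^ (k + 1) = i - 2 ^ k - 2 ^ k := by ring
    rw [pow_succ 2 k, mul_two, Function.iterate_add_apply, ih, ih, ih, hpow]
    linear_combination CharTwo.add_self_eq_zero (x (i - 2 ^ k))


/-- For a `2`-XOR circulant network of size `n = 2^(q+1)` with
interaction-step `0` (global transition function `F x i = x (i-1) + x i`), for every
configuration `x`: (1) `F^(2^q) x` is a repeated configuration, and (2) the half of
`F^(2^q) x` has the same parity of number of `1`s as `x`. -/
theorem two_xor_half_time_repeated (q : ℕ) (n : ℕ) (hn : n = 2 ^ (q + 1))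
    (F : (ZMod n → ZMod 2) → (ZMod n → ZMod 2))
    (hF : ∀ (x : ZMod n → ZMod 2) (i : ZMod n), F x i = x (i - 1) + x i) :
    ∀ x : ZMod n → ZMod 2,
      (∀ i : ZMod n, F^[2 ^ q] x (i + (2 ^ q : ZMod n)) = F^[2 ^ q] x i) ∧
      (∑ i ∈ Finset.range (2 ^ q), F^[2 ^ q] x ((i : ℕ) : ZMod n) =
        ∑ i ∈ Finset.range n, x ((i : ℕ) : ZMod n)) := by
  intro x
  have hzero : (2 : ZMod n) ^ q + 2 ^ q = 0 := by
    have h : ((2 ^ (q + 1) : ℕ) : ZMod n) = 0 := by rw [← hn]; exact ZMod.natCast_self n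
    push_cast at h
    rw [← h]; ring
  have hshift (i : ZMod n) : i - 2 ^ q = i + 2 ^ q := by linear_combination -hzero
  have hiter := two_xor_iterate_two_pow F hF q
  refine ⟨fun i => ?_, ?_⟩
  · rw [hiter, hiter, hshift i, add_sub_cancel_right, add_comm]
  · have hn2 : n = 2 ^ q + 2 ^ q := by rw [hn]; ring
    have hsum : ∑ i ∈ Finset.range n, x ((i : ℕ) : ZMod n) =
        ∑ i ∈ Finset.range (2 ^ q + 2 ^ q), x ((i : ℕ) : ZMod n) :=
      congrArg (fun m => ∑ i ∈ Finset.range m, x ((i : ℕ) : ZMod n)) hn2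
    rw [hsum, Finset.sum_range_add, ← Finset.sum_add_distrib]
    refine Finset.sum_congr rfl fun i _ => ?_
    rw [hiter, hshift, add_comm]
    push_cast
    rw [add_comm (i : ZMod n)]
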